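/- Let T > 0, p₀ > 0, and let γ denote the standard Gaussian measure on ℝ (mean 0, variance 1). Let C̄ : ℝ → ℝ be continuous on (0,∞), nonnegative on (0,∞), nondecreasing on (0,∞), concave on (0,∞), strictly concave on some interval (q̲, q̄) with 0 < q̲ < q̄, and satisfy C̄(q) → 0 as q → 0⁺ and C̄(q)/q → 0 as q → ∞. Define G(σ) := ∫ C̄(p₀·exp(−σ²T/2 + σ√T·z)) dγ(z). Then for every π̄ with 0 ≤ π̄ < C̄(p₀) there exists a unique σ ≥ 0 such that C̄(p₀) − G(σ) = π̄. -/

import Mathlib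

open MeasureTheory ProbabilityTheory Filter

lemma aux_support (C : ℝ → ℝ) (hconc : ConcaveOn ℝ (Set.Ioi (0 : ℝ)) C) (x : ℝ) (hx : 0 < x) :
    ∃ m : ℝ, ∀ y, 0 < y → C y ≤ C x + m * (y - x) := by
  have key : ∀ a b, 0 < a → a < x → x < b → (C b - C x) / (b - x) ≤ (C x - C a) / (x - a) :=
    fun a b ha hax hxb => hconc.slope_anti_adjacent (Set.mem_Ioi.2 ha)
      (Set.mem_Ioi.2 (hx.trans hxb)) hax hxb
  let S : Set ℝ := (fun b => (C b - C x) / (b - x)) '' Set.Ioi x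
  have hne : S.Nonempty := ⟨_, x + 1, by simp, rfl⟩
  have hub : ∀ a, 0 < a → a < x → (C x - C a) / (x - a) ∈ upperBounds S := by
    rintro a ha hax _ ⟨b, hb, rfl⟩
    exact key a b ha hax hb
  have hbdd : BddAbove S := ⟨_, hub (x / 2) (by linarith) (by linarith)⟩
  refine ⟨sSup S, fun y hy => ?_⟩
  rcases lt_trichotomy y x with h | h | h
  · have h1 := csSup_le hne (hub y hy h)
    rw [le_div_iff₀ (by linarith)] at h1
    linarith
  · simp [h]
  · have h1 : (C y - C x) / (y - x) ≤ sSup S := le_csSup hbdd ⟨y, h, rfl⟩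
    rw [div_le_iff₀ (by linarith)] at h1
    linarith

lemma aux_cont (C : ℝ → ℝ) (hcont : ContinuousOn C (Set.Ioi (0 : ℝ))) {X : Type*}
    [TopologicalSpace X] (x : ℝ) (hx : 0 < x) (g : X → ℝ) (hg : Continuous g) :
    Continuous (fun u => C (x * Real.exp (g u))) := by
  refine hcont.comp_continuous (by fun_prop) fun u => ?_
  exact mul_pos hx (Real.exp_pos _)

lemma aux_exp_int (v : NNReal) (x c : ℝ) :
    Integrable (fun u => x * Real.exp (c + u)) (gaussianReal 0 v) := by
  have h := (integrable_exp_mul_gaussianReal (μ := 0) (v := v) 1).const_mul (x * Real.exp c)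
  refine h.congr (ae_of_all _ fun u => ?_)
  simp [Real.exp_add, mul_assoc]

lemma aux_exp_val (v : NNReal) (x : ℝ) :
    ∫ u, x * Real.exp (-(v : ℝ) / 2 + u) ∂(gaussianReal 0 v) = x := by
  have h : mgf (fun x ↦ x) (gaussianReal 0 v) 1 = _ := congrFun mgf_fun_id_gaussianReal 1
  simp only [mgf, one_mul, zero_mul, zero_add, one_pow, mul_one] at h
  rw [integral_const_mul]
  simp_rw [Real.exp_add]
  rw [integral_const_mul, h, ← Real.exp_add]
  have : -(v : ℝ) / 2 + v / 2 = 0 := by ring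
  simp [this]

lemma aux_int (C : ℝ → ℝ) (hcont : ContinuousOn C (Set.Ioi (0 : ℝ)))
    (hnn : ∀ q : ℝ, 0 < q → 0 ≤ C q)
    (hconc : ConcaveOn ℝ (Set.Ioi (0 : ℝ)) C) (v : NNReal) (x c : ℝ) (hx : 0 < x) :
    Integrable (fun u => C (x * Real.exp (c + u))) (gaussianReal 0 v) := by
  obtain ⟨m, hm⟩ := aux_support C hconc x hx
  refine Integrable.mono' (g := fun u => C x + m * (x * Real.exp (c + u) - x)) ?_
    (aux_cont C hcont x hx _ (by fun_prop)).aestronglyMeasurable (ae_of_all _ fun u => ?_)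
  · exact (integrable_const _).add (((aux_exp_int v x c).sub (integrable_const _)).const_mul m)
  · have hp : 0 < x * Real.exp (c + u) := mul_pos hx (Real.exp_pos _)
    rw [Real.norm_of_nonneg (hnn _ hp)]
    exact hm _ hp

lemma aux_jensen (C : ℝ → ℝ) (hcont : ContinuousOn C (Set.Ioi (0 : ℝ)))
    (hnn : ∀ q : ℝ, 0 < q → 0 ≤ C q)
    (hconc : ConcaveOn ℝ (Set.Ioi (0 : ℝ)) C)
    (qlo qhi : ℝ) (hqlo : 0 < qlo) (hqs : qlo < qhi)
    (hstrict : StrictConcaveOn ℝ (Set.Ioo qlo qhi) C) (v : NNReal) (hv : v ≠ 0)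
    (x : ℝ) (hx : 0 < x) :
    ∫ u, C (x * Real.exp (-(v : ℝ) / 2 + u)) ∂(gaussianReal 0 v) < C x := by
  obtain ⟨m, hm⟩ := aux_support C hconc x hx
  have hpos : ∀ u, 0 < x * Real.exp (-(v : ℝ) / 2 + u) := fun u => mul_pos hx (Real.exp_pos _)
  let L : ℝ → ℝ := fun u => C x + m * (x * Real.exp (-(v : ℝ) / 2 + u) - x)
  have hLi : Integrable L (gaussianReal 0 v) :=
    (integrable_const _).add (((aux_exp_int v x _).sub (integrable_const _)).const_mul m)
  have hLv : ∫ u, L u ∂(gaussianReal 0 v) = C x := by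
    simp only [L]
    have hsub : Integrable (fun u => m * (x * Real.exp (-(v : ℝ) / 2 + u) - x))
        (gaussianReal 0 v) := ((aux_exp_int v x _).sub (integrable_const _)).const_mul m
    rw [integral_add (integrable_const _) hsub, integral_const_mul,
      integral_sub (aux_exp_int v x _) (integrable_const _), aux_exp_val]
    simp
  have hCi := aux_int C hcont hnn hconc v x (-(v : ℝ) / 2) hx
  have hle : ∀ u, C (x * Real.exp (-(v : ℝ) / 2 + u)) ≤ L u := fun u => hm _ (hpos u)
  refine lt_of_le_of_ne ?_ fun heq => ?_
  · rw [← hLv]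
    exact integral_mono hCi hLi hle
  have h0 : ∫ u, (L u - C (x * Real.exp (-(v : ℝ) / 2 + u))) ∂(gaussianReal 0 v) = 0 := by
    rw [integral_sub hLi hCi, hLv, heq, sub_self]
  rw [integral_eq_zero_iff_of_nonneg (fun u => sub_nonneg.2 (hle u)) (hLi.sub hCi)] at h0
  have h1 := (gaussianReal_absolutelyContinuous' 0 hv).ae_le h0
  have hLc : Continuous L := by fun_prop
  have hcc := aux_cont C hcont x hx (fun u : ℝ => -(v : ℝ) / 2 + u) (by fun_prop)
  have h2 := (Continuous.ae_eq_iff_eq (μ := (volume : Measure ℝ)) (hLc.sub hcc)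
    (continuous_const (y := (0 : ℝ)))).1 h1
  have haff : ∀ y, 0 < y → C y = C x + m * (y - x) := by
    intro y hy
    have h3 := congrFun h2 (Real.log (y / x) + v / 2)
    have h4 : x * Real.exp (-(v : ℝ) / 2 + (Real.log (y / x) + v / 2)) = y := by
      rw [show -(v : ℝ) / 2 + (Real.log (y / x) + v / 2) = Real.log (y / x) by ring,
        Real.exp_log (by positivity)]
      field_simp
    simp only [L, Pi.sub_apply, h4] at h3
    linarith
  have h5 := hstrict.slope_anti_adjacent (x := qlo + (qhi - qlo) / 4) (y := qlo + (qhi - qlo) / 2)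
    (z := qlo + 3 * (qhi - qlo) / 4) ⟨by linarith, by linarith⟩ ⟨by linarith, by linarith⟩
    (by linarith) (by linarith)
  rw [haff _ (by linarith), haff (qlo + (qhi - qlo) / 2) (by linarith),
    haff (qlo + (qhi - qlo) / 4) (by linarith), div_lt_div_iff₀ (by linarith) (by linarith)] at h5
  apply lt_irrefl _ (h5.trans_eq _)
  ring

lemma aux_strict (C : ℝ → ℝ) (hcont : ContinuousOn C (Set.Ioi (0 : ℝ)))
    (hnn : ∀ q : ℝ, 0 < q → 0 ≤ C q)
    (hconc : ConcaveOn ℝ (Set.Ioi (0 : ℝ)) C)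
    (qlo qhi : ℝ) (hqlo : 0 < qlo) (hqs : qlo < qhi)
    (hstrict : StrictConcaveOn ℝ (Set.Ioo qlo qhi) C) (v w : NNReal) (hw : w ≠ 0)
    (x : ℝ) (hx : 0 < x) :
    ∫ u, C (x * Real.exp (-((v + w : NNReal) : ℝ) / 2 + u)) ∂(gaussianReal 0 (v + w)) <
      ∫ u, C (x * Real.exp (-(v : ℝ) / 2 + u)) ∂(gaussianReal 0 v) := by
  have hi := aux_int C hcont hnn hconc (v + w) x (-((v + w : NNReal) : ℝ) / 2) hx
  have hi1 := aux_int C hcont hnn hconc v x (-(v : ℝ) / 2) hx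
  have hconv : gaussianReal 0 (v + w) = (gaussianReal 0 v) ∗ (gaussianReal 0 w) := by
    rw [gaussianReal_conv_gaussianReal]; simp
  rw [hconv] at hi ⊢
  rw [integral_conv hi]
  have hi2 := ((integrable_conv_iff hi.1).1 hi).2
  have hfe : ∀ a b : ℝ, x * Real.exp (-((v + w : NNReal) : ℝ) / 2 + (a + b)) =
      (x * Real.exp (-(v : ℝ) / 2 + a)) * Real.exp (-(w : ℝ) / 2 + b) := by
    intro a b
    rw [mul_assoc, ← Real.exp_add]
    congr 2
    push_cast
    ring
  have hn : ∀ a b : ℝ, ‖C (x * Real.exp (-((v + w : NNReal) : ℝ) / 2 + (a + b)))‖ =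
      C (x * Real.exp (-((v + w : NNReal) : ℝ) / 2 + (a + b))) := fun a b =>
    Real.norm_of_nonneg (hnn _ (mul_pos hx (Real.exp_pos _)))
  simp_rw [hn, hfe] at hi2
  simp_rw [hfe]
  have hlt : ∀ a : ℝ, ∫ b, C ((x * Real.exp (-(v : ℝ) / 2 + a)) * Real.exp (-(w : ℝ) / 2 + b))
      ∂(gaussianReal 0 w) < C (x * Real.exp (-(v : ℝ) / 2 + a)) := fun a =>
    aux_jensen C hcont hnn hconc qlo qhi hqlo hqs hstrict w hw _ (mul_pos hx (Real.exp_pos _))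
  refine lt_of_le_of_ne (integral_mono hi2 hi1 fun a => (hlt a).le) fun heq => ?_
  have h0 := integral_sub hi1 hi2
  rw [heq, sub_self, integral_eq_zero_iff_of_nonneg (fun a => sub_nonneg.2 (hlt a).le)
    (hi1.sub hi2)] at h0
  obtain ⟨a, ha⟩ := h0.exists
  have := hlt a
  simp only [Pi.zero_apply] at ha
  linarith

lemma aux_law (C : ℝ → ℝ) (T x σ : ℝ) (hT : 0 < T)
    (hcont : ContinuousOn C (Set.Ioi (0 : ℝ))) (hx : 0 < x) :
    ∫ z, C (x * Real.exp (-σ ^ 2 * T / 2 + σ * Real.sqrt T * z)) ∂(gaussianReal 0 1) =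
    ∫ u, C (x * Real.exp (-((σ ^ 2 * T).toNNReal : ℝ) / 2 + u))
      ∂(gaussianReal 0 (σ ^ 2 * T).toNNReal) := by
  have h := gaussianReal_map_const_mul (μ := 0) (v := 1) (σ * Real.sqrt T)
  have hv : (NNReal.mk ((σ * Real.sqrt T) ^ 2) (sq_nonneg _) * 1) = (σ ^ 2 * T).toNNReal := by
    ext
    rw [Real.coe_toNNReal _ (by positivity)]
    simp [mul_pow, Real.sq_sqrt hT.le]
  rw [hv, mul_zero] at h
  rw [← h, integral_map (by fun_prop)
    (aux_cont C hcont x hx _ (by fun_prop)).aestronglyMeasurable,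
    Real.coe_toNNReal _ (by positivity)]
  simp only [neg_mul]

lemma aux_absexp (a : ℝ) : Integrable (fun z => Real.exp (a * |z|)) (gaussianReal 0 1) := by
  refine Integrable.mono' ((integrable_exp_mul_gaussianReal (μ := 0) (v := 1) a).add
    (integrable_exp_mul_gaussianReal (μ := 0) (v := 1) (-a)))
    (by fun_prop) (ae_of_all _ fun z => ?_)
  rw [Real.norm_of_nonneg (Real.exp_pos _).le]
  have h1 := Real.exp_pos (a * z)
  have h2 := Real.exp_pos (-a * z)
  simp only [Pi.add_apply]
  rcases abs_cases z with ⟨h, _⟩ | ⟨h, _⟩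
  · rw [h]; linarith
  · rw [h, mul_neg, ← neg_mul]; linarith

lemma aux_contG (C : ℝ → ℝ) (T x : ℝ) (hT : 0 < T) (hx : 0 < x)
    (hcont : ContinuousOn C (Set.Ioi (0 : ℝ)))
    (hnn : ∀ q : ℝ, 0 < q → 0 ≤ C q)
    (hconc : ConcaveOn ℝ (Set.Ioi (0 : ℝ)) C) :
    Continuous (fun σ : ℝ => ∫ z, C (x * Real.exp (-σ ^ 2 * T / 2 + σ * Real.sqrt T * z))
      ∂(gaussianReal 0 1)) := by
  obtain ⟨m, hm⟩ := aux_support C hconc x hx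
  rw [continuous_iff_continuousAt]
  intro σ₀
  let M : ℝ := |σ₀| + 1
  refine continuousAt_of_dominated
    (bound := fun z => |C x| + |m| * (x * Real.exp (M * Real.sqrt T * |z|) + x)) ?_ ?_ ?_ ?_
  · exact Eventually.of_forall fun σ =>
      (aux_cont C hcont x hx _ (by fun_prop)).aestronglyMeasurable
  · have hev : ∀ᶠ σ : ℝ in nhds σ₀, |σ| < M :=
      continuous_abs.continuousAt.eventually (gt_mem_nhds (by simp [M]))
    filter_upwards [hev] with σ hσ
    refine ae_of_all _ fun z => ?_
    have hp := mul_pos hx (Real.exp_pos (-σ ^ 2 * T / 2 + σ * Real.sqrt T * z))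
    rw [Real.norm_of_nonneg (hnn _ hp)]
    refine (hm _ hp).trans ?_
    have h1 : -σ ^ 2 * T / 2 + σ * Real.sqrt T * z ≤ M * Real.sqrt T * |z| := by
      have h2 : σ * z ≤ M * |z| := by
        calc σ * z ≤ |σ * z| := le_abs_self _
          _ = |σ| * |z| := abs_mul _ _
          _ ≤ M * |z| := by gcongr
      have h3 := mul_le_mul_of_nonneg_left h2 (Real.sqrt_nonneg T)
      have h4 : 0 ≤ σ ^ 2 * T := by positivity
      linarith
    have h5 := mul_le_mul_of_nonneg_left (Real.exp_le_exp.2 h1) hx.le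
    refine add_le_add (le_abs_self _) ?_
    refine (le_abs_self _).trans ?_
    rw [abs_mul]
    refine mul_le_mul_of_nonneg_left ?_ (abs_nonneg _)
    rw [abs_le]
    constructor <;> linarith [mul_pos hx (Real.exp_pos (M * Real.sqrt T * |z|))]
  · exact (integrable_const _).add
      ((((aux_absexp _).const_mul x).add (integrable_const _)).const_mul _)
  · refine ae_of_all _ fun z => Continuous.continuousAt ?_
    exact aux_cont C hcont x hx _ (by fun_prop)

lemma aux_lim (C : ℝ → ℝ) (T x : ℝ) (hT : 0 < T) (hx : 0 < x)
    (hcont : ContinuousOn C (Set.Ioi (0 : ℝ)))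
    (hnn : ∀ q : ℝ, 0 < q → 0 ≤ C q)
    (hmono : MonotoneOn C (Set.Ioi (0 : ℝ)))
    (hconc : ConcaveOn ℝ (Set.Ioi (0 : ℝ)) C)
    (hlim0 : Tendsto C (nhdsWithin 0 (Set.Ioi (0 : ℝ))) (nhds 0))
    (hliminf : Tendsto (fun q => C q / q) atTop (nhds 0)) (δ : ℝ) (hδ : 0 < δ) :
    ∃ σ : ℝ, 0 ≤ σ ∧ ∫ z, C (x * Real.exp (-σ ^ 2 * T / 2 + σ * Real.sqrt T * z))
      ∂(gaussianReal 0 1) < δ := by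
  let ε : ℝ := δ / (2 * x)
  have hε : 0 < ε := by positivity
  obtain ⟨Q, hQ⟩ := ((hliminf.eventually (gt_mem_nhds hε)).and
    (eventually_gt_atTop (0 : ℝ))).exists_forall_of_atTop
  have hQ0 : 0 < Q := (hQ Q le_rfl).2
  let K : ℝ := C Q
  have hK : 0 ≤ K := hnn Q hQ0
  have hCK : ∀ q, 0 < q → C q ≤ min (C q) K + ε * q := by
    intro q hq
    have h0 : 0 < ε * q := by positivity
    rcases le_total q Q with h | h
    · have : C q ≤ K := hmono hq hQ0 h
      rw [min_eq_left this]; linarith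
    · have h1 := (hQ q h).1
      rw [div_lt_iff₀ hq] at h1
      have : 0 ≤ min (C q) K := le_min (hnn q hq) hK
      linarith
  let e : ℝ → ℝ → ℝ := fun σ z => -σ ^ 2 * T / 2 + σ * Real.sqrt T * z
  have hec : ∀ σ, Continuous (e σ) := fun σ => by simp only [e]; fun_prop
  have hbd : ∀ σ z, ‖min (C (x * Real.exp (e σ z))) K‖ ≤ K := by
    intro σ z
    rw [Real.norm_of_nonneg (le_min (hnn _ (mul_pos hx (Real.exp_pos _))) hK)]
    exact min_le_right _ _
  have hmeas : ∀ σ, AEStronglyMeasurable (fun z => min (C (x * Real.exp (e σ z))) K)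
      (gaussianReal 0 1) := fun σ =>
    ((aux_cont C hcont x hx _ (hec σ)).min continuous_const).aestronglyMeasurable
  have hlim : Tendsto (fun σ : ℝ => ∫ z, min (C (x * Real.exp (e σ z))) K ∂(gaussianReal 0 1))
      atTop (nhds (∫ z, (0 : ℝ) ∂(gaussianReal 0 1))) := by
    refine tendsto_integral_filter_of_dominated_convergence (fun _ => K)
      (Eventually.of_forall hmeas) (Eventually.of_forall fun σ => ae_of_all _ (hbd σ))
      (integrable_const _) (ae_of_all _ fun z => ?_)
    have h1 : Tendsto (fun σ : ℝ => e σ z) atTop atBot := by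
      have h2 : Tendsto (fun σ : ℝ => σ * (-(T / 2) * σ + Real.sqrt T * z)) atTop atBot := by
        refine tendsto_id.atTop_mul_atBot₀ ?_
        refine tendsto_atBot_add_const_right _ _ ?_
        exact tendsto_id.const_mul_atTop_of_neg (by linarith)
      refine h2.congr fun σ => ?_
      simp only [e]; ring
    have h3 : Tendsto (fun σ : ℝ => x * Real.exp (e σ z)) atTop (nhds 0) := by
      simpa using (Real.tendsto_exp_atBot.comp h1).const_mul x
    have h4 : Tendsto (fun σ : ℝ => C (x * Real.exp (e σ z))) atTop (nhds 0) :=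
      hlim0.comp (tendsto_nhdsWithin_iff.2
        ⟨h3, Eventually.of_forall fun σ => mul_pos hx (Real.exp_pos _)⟩)
    have h5 := h4.min (tendsto_const_nhds (x := K))
    rwa [min_eq_left hK] at h5
  rw [integral_zero] at hlim
  obtain ⟨σ, hσ, hσ0⟩ := ((hlim.eventually (gt_mem_nhds (half_pos hδ))).and
    (eventually_ge_atTop (0 : ℝ))).exists
  refine ⟨σ, hσ0, ?_⟩
  have hexp : ∫ z, x * Real.exp (e σ z) ∂(gaussianReal 0 1) = x := by
    have := aux_law id T x σ hT continuousOn_id hx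
    simp only [id] at this
    rw [aux_exp_val] at this
    exact this
  have hexpi : Integrable (fun z => x * Real.exp (e σ z)) (gaussianReal 0 1) := by
    by_contra hc
    rw [integral_undef hc] at hexp
    exact hx.ne hexp
  have hmini : Integrable (fun z => min (C (x * Real.exp (e σ z))) K) (gaussianReal 0 1) :=
    (integrable_const K).mono' (hmeas σ) (ae_of_all _ (hbd σ))
  have hle : ∫ z, C (x * Real.exp (e σ z)) ∂(gaussianReal 0 1) ≤
      ∫ z, (min (C (x * Real.exp (e σ z))) K + ε * (x * Real.exp (e σ z)))
        ∂(gaussianReal 0 1) := by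
    refine integral_mono_of_nonneg (ae_of_all _ fun z => hnn _ (mul_pos hx (Real.exp_pos _)))
      (hmini.add (hexpi.const_mul ε)) (ae_of_all _ fun z => hCK _ (mul_pos hx (Real.exp_pos _)))
  rw [integral_add hmini (hexpi.const_mul ε), integral_const_mul, hexp] at hle
  have : ε * x = δ / 2 := by simp only [ε]; field_simp
  change ∫ z, C (x * Real.exp (e σ z)) ∂(gaussianReal 0 1) < δ
  linarith

/-- (Implied volatility bijection.) If `C̄` is continuous, nonnegative,
nondecreasing, concave on `(0,∞)`, strictly concave on some `(q̲, q̄)` with `0 < q̲ < q̄`,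
and satisfies `C̄(q) → 0` as `q → 0⁺` and `C̄(q)/q → 0` as `q → ∞`, then for every fixed
leg `π̄ ∈ [0, C̄(p₀))` there is a unique implied volatility `σ ≥ 0` with
`C̄(p₀) − G(σ) = π̄`, where `G(σ) = ∫ C̄(p₀·exp(−σ²T/2 + σ√T·z)) dγ(z)`. -/
theorem implied_volatility_bijection (T p₀ : ℝ) (hT : 0 < T) (hp₀ : 0 < p₀)
    (C : ℝ → ℝ) (hcont : ContinuousOn C (Set.Ioi (0 : ℝ)))
    (hnn : ∀ q : ℝ, 0 < q → 0 ≤ C q)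
    (hmono : MonotoneOn C (Set.Ioi (0 : ℝ)))
    (hconc : ConcaveOn ℝ (Set.Ioi (0 : ℝ)) C)
    (qlo qhi : ℝ) (hqlo : 0 < qlo) (hqs : qlo < qhi)
    (hstrict : StrictConcaveOn ℝ (Set.Ioo qlo qhi) C)
    (hlim0 : Tendsto C (nhdsWithin 0 (Set.Ioi (0 : ℝ))) (nhds 0))
    (hliminf : Tendsto (fun q => C q / q) atTop (nhds 0)) :
    let G : ℝ → ℝ := fun σ =>
      ∫ z, C (p₀ * Real.exp (-σ ^ 2 * T / 2 + σ * Real.sqrt T * z))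
        ∂(gaussianReal 0 1)
    ∀ π : ℝ, 0 ≤ π → π < C p₀ →
      ∃! σ : ℝ, 0 ≤ σ ∧ C p₀ - G σ = π := by
  intro G π hπ0 hπ
  have hGc : Continuous G := aux_contG C T p₀ hT hp₀ hcont hnn hconc
  have hG0 : G 0 = C p₀ := by simp [G]
  have hanti : ∀ a b : ℝ, 0 ≤ a → a < b → G b < G a := by
    intro a b ha hab
    have hsq : a ^ 2 * T < b ^ 2 * T := by
      have : a ^ 2 < b ^ 2 := by nlinarith
      exact mul_lt_mul_of_pos_right this hT
    have h := aux_strict C hcont hnn hconc qlo qhi hqlo hqs hstrict (a ^ 2 * T).toNNReal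
      (b ^ 2 * T - a ^ 2 * T).toNNReal
      (by simpa [Real.toNNReal_eq_zero, not_le] using hsq) p₀ hp₀
    rw [← Real.toNNReal_add (by positivity) (by linarith), add_sub_cancel,
      ← aux_law C T p₀ a hT hcont hp₀, ← aux_law C T p₀ b hT hcont hp₀] at h
    exact h
  obtain ⟨s, hs0, hs⟩ := aux_lim C T p₀ hT hp₀ hcont hnn hmono hconc hlim0 hliminf (C p₀ - π)
    (by linarith)
  have hs' : G s < C p₀ - π := hs
  obtain ⟨σ, hσ, hσe⟩ := intermediate_value_Icc' hs0 hGc.continuousOn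
    (show C p₀ - π ∈ Set.Icc (G s) (G 0) from ⟨hs'.le, by rw [hG0]; linarith⟩)
  refine ⟨σ, ⟨hσ.1, by rw [hσe]; ring⟩, ?_⟩
  rintro τ ⟨hτ0, hτ⟩
  rcases lt_trichotomy τ σ with h | h | h
  · have := hanti τ σ hτ0 h
    linarith
  · exact h
  · have := hanti σ τ hσ.1 h
    linarith
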